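/- Let (X,ρ) be a separable metric space, q ∈ ℝ, ξ ∈ Φ_D a blanketed premeasure, ε > 0, and μ a blanketed Borel probability measure on X. Assume H^{q,ξ}_μ(X) < ∞. Let Λ^{q,ξ}_{μ,ε} = { x ∈ X : ∃ δ_x > 0 such that H^{q,ξ}_μ(B(x,r)) ≤ (1+ε) μ(B(x,r))^q ξ(B(x,r)) for all r ≤ δ_x }. Then H^{q,ξ}_μ(X) = H^{q,ξ}_μ(Λ^{q,ξ}_{μ,ε}). -/

import Mathlib

open Metric MeasureTheory Set Filter TopologicalSpace
open scoped ENNReal NNReal Classical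

noncomputable section

/-- `x ^ q` for extended nonnegative reals, with the paper's convention
`0 ^ q = ∞` for `q ≤ 0`. -/
def epow (x : ℝ≥0∞) (q : ℝ) : ℝ≥0∞ := if x = 0 ∧ q ≤ 0 then ∞ else x ^ q

variable {X X' : Type*}

section Defs

variable [MetricSpace X] [MetricSpace X']

/-- A premeasure on a metric space: an increasing `[0,∞]`-valued function on the family of
closed balls, vanishing on the empty set. -/
def IsPremeasure (ξ : Set X → ℝ≥0∞) : Prop :=
  ξ ∅ = 0 ∧ ∀ (x : X) (r : ℝ) (x' : X) (r' : ℝ),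
    closedBall x r ⊆ closedBall x' r' → ξ (closedBall x r) ≤ ξ (closedBall x' r')

/-- The doubling ("blanketed") condition defining the class `Φ_D` of premeasures:
`ξ(B(x,2r)) ≤ K ξ(B(x,r))` for some constant `K > 1`, all `x` and all `0 < r ≤ 1`. -/
def PremeasureBlanketed (ξ : Set X → ℝ≥0∞) : Prop :=
  ∃ K : ℝ≥0, 1 < K ∧ ∀ (x : X) (r : ℝ), 0 < r → r ≤ 1 →
    ξ (closedBall x (2 * r)) ≤ (K : ℝ≥0∞) * ξ (closedBall x r)

variable [MeasurableSpace X] [MeasurableSpace X']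

/-- The support of a Borel measure on a metric space. -/
def measSupport (μ : Measure X) : Set X := {x : X | ∀ r : ℝ, 0 < r → 0 < μ (ball x r)}

/-- A blanketed (doubling) measure: for some `a > 1`,
`limsup_{r → 0⁺} sup_{x ∈ supp μ} μ(B(x,ar)) / μ(B(x,r)) < ∞`. -/
def MeasureBlanketed (μ : Measure X) : Prop :=
  ∃ a : ℝ, 1 < a ∧
    limsup (fun r : ℝ => ⨆ x ∈ measSupport μ,
      μ (closedBall x (a * r)) / μ (closedBall x r)) (nhdsWithin 0 (Ioi 0)) < ∞

/-- The quantity `μ(B)^q ξ(B)` attached to a ball `B`. -/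
def ballWeight (μ : Measure X) (q : ℝ) (ξ : Set X → ℝ≥0∞) (B : Set X) : ℝ≥0∞ :=
  epow (μ B) q * ξ B

/-- A centered `δ`-cover of `E`: countably many closed balls centered in `E`, of diameters
at most `2δ`, covering `E`. -/
def IsCenteredCover (E : Set X) (δ : ℝ) (c : ℕ → X) (r : ℕ → ℝ) : Prop :=
  (∀ i, c i ∈ E) ∧ (∀ i, diam (closedBall (c i) (r i)) ≤ 2 * δ) ∧
    E ⊆ ⋃ i, closedBall (c i) (r i)

/-- The pre-Hausdorff quantity `H^{q,ξ}_{μ,δ}(E)`. -/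
def Hd (μ : Measure X) (q : ℝ) (ξ : Set X → ℝ≥0∞) (δ : ℝ) (E : Set X) : ℝ≥0∞ :=
  if E = ∅ then 0 else
    ⨅ (c : ℕ → X) (r : ℕ → ℝ) (_ : IsCenteredCover E δ c r),
      ∑' i, ballWeight μ q ξ (closedBall (c i) (r i))

/-- `H^{q,ξ}_{μ,0}(E) = sup_{δ > 0} H^{q,ξ}_{μ,δ}(E)`. -/
def H0 (μ : Measure X) (q : ℝ) (ξ : Set X → ℝ≥0∞) (E : Set X) : ℝ≥0∞ :=
  ⨆ (δ : ℝ) (_ : 0 < δ), Hd μ q ξ δ E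

/-- The generalized Hausdorff measure `H^{q,ξ}_μ(E) = sup_{F ⊆ E} H^{q,ξ}_{μ,0}(F)`. -/
def HM (μ : Measure X) (q : ℝ) (ξ : Set X → ℝ≥0∞) (E : Set X) : ℝ≥0∞ :=
  ⨆ (F : Set X) (_ : F ⊆ E), H0 μ q ξ F

/-- A weighted and centered `δ`-cover of `E`: countably many pairs `(w i, B i)` of nonnegative
weights and closed balls centered in `E` of diameters at most `2δ`, with
`Σ {w i : x ∈ B i} ≥ 1` for every `x ∈ E`. -/
def IsWeightedCover (E : Set X) (δ : ℝ) (w : ℕ → ℝ≥0) (c : ℕ → X) (r : ℕ → ℝ) : Prop :=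
  (∀ i, c i ∈ E) ∧ (∀ i, diam (closedBall (c i) (r i)) ≤ 2 * δ) ∧
    ∀ x ∈ E, 1 ≤ ∑' i, (if x ∈ closedBall (c i) (r i) then (w i : ℝ≥0∞) else 0)

/-- The pre-weighted-Hausdorff quantity `W^{q,ξ}_{μ,δ}(E)`. -/
def Wd (μ : Measure X) (q : ℝ) (ξ : Set X → ℝ≥0∞) (δ : ℝ) (E : Set X) : ℝ≥0∞ :=
  if E = ∅ then 0 else
    ⨅ (w : ℕ → ℝ≥0) (c : ℕ → X) (r : ℕ → ℝ) (_ : IsWeightedCover E δ w c r),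
      ∑' i, (w i : ℝ≥0∞) * ballWeight μ q ξ (closedBall (c i) (r i))

/-- `W^{q,ξ}_{μ,0}(E) = sup_{δ > 0} W^{q,ξ}_{μ,δ}(E)`. -/
def W0 (μ : Measure X) (q : ℝ) (ξ : Set X → ℝ≥0∞) (E : Set X) : ℝ≥0∞ :=
  ⨆ (δ : ℝ) (_ : 0 < δ), Wd μ q ξ δ E

/-- The weighted generalized Hausdorff measure `W^{q,ξ}_μ(E) = sup_{F ⊆ E} W^{q,ξ}_{μ,0}(F)`. -/
def WM (μ : Measure X) (q : ℝ) (ξ : Set X → ℝ≥0∞) (E : Set X) : ℝ≥0∞ :=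
  ⨆ (F : Set X) (_ : F ⊆ E), W0 μ q ξ F

/-- Hypothesis (H) for `(X, ξ, μ)`: for every `ε > 0`, `X` can be covered by countably many
closed balls of diameters `< ε` on which `μ(B)^q ξ(B)` is finite. -/
def HypH (μ : Measure X) (q : ℝ) (ξ : Set X → ℝ≥0∞) : Prop :=
  ∀ ε : ℝ, 0 < ε → ∃ (c : ℕ → X) (r : ℕ → ℝ),
    (univ : Set X) ⊆ (⋃ i, closedBall (c i) (r i)) ∧
    (∀ i, diam (closedBall (c i) (r i)) < ε) ∧
    ∀ i, ballWeight μ q ξ (closedBall (c i) (r i)) < ∞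

/-- The product premeasure `ξ₀(B × B') = ξ(B) ξ'(B')` on the product space (whose closed balls
are exactly the products `B(x,r) × B(x',r)`), with the convention `0 ⬝ ∞ = ∞ ⬝ 0 = 0`. -/
def prodPre (ξ : Set X → ℝ≥0∞) (ξ' : Set X' → ℝ≥0∞) : Set (X × X') → ℝ≥0∞ :=
  fun S => ξ (Prod.fst '' S) * ξ' (Prod.snd '' S)

/-- Two sets are (positively) separated: `inf {ρ(x,y) : x ∈ E, y ∈ F} > 0`. -/
def SepSets (E F : Set X) : Prop := 0 < ⨅ x ∈ E, ⨅ y ∈ F, edist x y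

/-- The upper `(q,ξ)`-density of `ν` at `x` with respect to `μ`:
`limsup_{r → 0⁺} ν(B(x,r)) / (μ(B(x,r))^q ξ(B(x,r)))`. -/
def upperDensity (μ : Measure X) (q : ℝ) (ξ : Set X → ℝ≥0∞) (x : X) (ν : Measure X) : ℝ≥0∞ :=
  limsup (fun r : ℝ => ν (closedBall x r) / ballWeight μ q ξ (closedBall x r))
    (nhdsWithin 0 (Ioi 0))

/-- A Hausdorff function: right continuous, monotone increasing `h : [0,∞] → [0,∞]` with
`h(0) = 0` and `h(r) > 0` for `r > 0`. -/
def IsHausdorffFunction (h : ℝ≥0∞ → ℝ≥0∞) : Prop :=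
  Monotone h ∧ h 0 = 0 ∧ (∀ r : ℝ≥0∞, 0 < r → 0 < h r) ∧
    ∀ r : ℝ≥0∞, ContinuousWithinAt h (Ici r) r

/-- The premeasure `ξ_h` induced by a Hausdorff function: `ξ_h(B) = h(diam B)` for `B ≠ ∅`,
`ξ_h(∅) = 0`. -/
def hausPre (h : ℝ≥0∞ → ℝ≥0∞) : Set X → ℝ≥0∞ :=
  fun B => if B = ∅ then 0 else h (EMetric.diam B)

end Defs

section Thms

variable [MetricSpace X] [SeparableSpace X] [MeasurableSpace X] [BorelSpace X]
variable [MetricSpace X'] [SeparableSpace X'] [MeasurableSpace X'] [BorelSpace X']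

open scoped Topology

/-!
Write `H` for the centred Hausdorff outer measure and let `F` nearly realise `H(X)` as a
pre-Hausdorff content. A point of `F` off the density set is the centre of arbitrarily
small balls with `H(B) > (1 + ε) μ(B)^q ξ(B)`. A disjoint Vitali family of such balls, with union
`W`, gives a cover of `F ∩ W` that is cheaper than `H(W)` by the factor `1 + ε`; since `F` is nearly
optimal, this forces `H(W)` to be small. What the family misses is covered by the tails of the
family enlarged five times, whose cost tends to `0` by the doubling conditions. For `q > 0` the
measure `μ` is doubling on its support only, but then the complement of the support is `H`-null.
-/

section Content

variable {α : Type*} [PseudoMetricSpace α] {φ : α × ℝ → ℝ≥0∞} {δ : ℝ} {E F G : Set α}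
  {S : Set (α × ℝ)}

/-- Centred `δ`-covers of `E`. A ball `B(x, r)` is encoded as the pair `(x, r)`, since it need not
determine its centre and radius, and a cover as a countable set of such pairs. -/
structure IsBallCover (E : Set α) (δ : ℝ) (S : Set (α × ℝ)) : Prop where
  countable : S.Countable
  center_mem : ∀ p ∈ S, p.1 ∈ E
  diam_le : ∀ p ∈ S, diam (closedBall p.1 p.2) ≤ 2 * δ
  subset : E ⊆ ⋃ p ∈ S, closedBall p.1 p.2

lemma IsBallCover.mono {δ' : ℝ} (hS : IsBallCover E δ S) (h : δ ≤ δ') : IsBallCover E δ' S where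
  __ := hS
  diam_le p hp := (hS.diam_le p hp).trans (by gcongr)

lemma IsBallCover.iUnion {ι : Type*} [Countable ι] {E : ι → Set α} {S : ι → Set (α × ℝ)}
    (hS : ∀ i, IsBallCover (E i) δ (S i)) : IsBallCover (⋃ i, E i) δ (⋃ i, S i) where
  countable := countable_iUnion fun i => (hS i).countable
  center_mem p hp :=
    let ⟨i, hi⟩ := mem_iUnion.1 hp
    mem_iUnion.2 ⟨i, (hS i).center_mem p hi⟩
  diam_le p hp :=
    let ⟨i, hi⟩ := mem_iUnion.1 hp
    (hS i).diam_le p hi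
  subset := by
    rw [biUnion_iUnion]
    exact iUnion_mono fun i => (hS i).subset

lemma isBallCover_range {ι : Type*} [Countable ι] {g : ι → α × ℝ} (hc : ∀ i, (g i).1 ∈ E)
    (hd : ∀ i, diam (closedBall (g i).1 (g i).2) ≤ 2 * δ)
    (hE : E ⊆ ⋃ i, closedBall (g i).1 (g i).2) : IsBallCover E δ (range g) where
  countable := countable_range g
  center_mem := forall_mem_range.2 hc
  diam_le := forall_mem_range.2 hd
  subset := by rwa [biUnion_range]

lemma IsBallCover.dist_center_le (hS : IsBallCover E δ S) {p : α × ℝ} (hp : p ∈ S) {x : α}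
    (hx : x ∈ closedBall p.1 p.2) : dist x p.1 ≤ 2 * δ :=
  (dist_le_diam_of_mem isBounded_closedBall hx
    (mem_closedBall_self (nonempty_closedBall.1 ⟨x, hx⟩))).trans (hS.diam_le p hp)

lemma IsBallCover.sep_left (hS : IsBallCover (F ∪ G) δ S)
    (h : ∀ x ∈ F, ∀ y ∈ G, 2 * δ < dist x y) : IsBallCover F δ {p ∈ S | p.1 ∈ F} where
  countable := hS.countable.mono (sep_subset _ _)
  center_mem p hp := hp.2
  diam_le p hp := hS.diam_le p hp.1
  subset x hx := by
    obtain ⟨p, hp, hxp⟩ := mem_iUnion₂.1 (hS.subset (Or.inl hx))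
    have hpF : p.1 ∈ F := (hS.center_mem p hp).resolve_right fun hpG =>
      (h x hx p.1 hpG).not_ge (hS.dist_center_le hp hxp)
    exact mem_iUnion₂.2 ⟨p, ⟨hp, hpF⟩, hxp⟩

/-- The centred pre-Hausdorff content of a gauge `φ`, where `φ (x, r)` is the cost of the ball
`B(x, r)`: the quantity `H_δ(E)` of the paper for an arbitrary cost. -/
def centeredContent (φ : α × ℝ → ℝ≥0∞) (δ : ℝ) (E : Set α) : ℝ≥0∞ :=
  ⨅ (S : Set (α × ℝ)) (_ : IsBallCover E δ S), ∑' p : S, φ p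

lemma centeredContent_le (hS : IsBallCover E δ S) : centeredContent φ δ E ≤ ∑' p : S, φ p :=
  iInf₂_le S hS

lemma exists_isBallCover_tsum_lt {t : ℝ≥0∞} (h : centeredContent φ δ E < t) :
    ∃ S, IsBallCover E δ S ∧ ∑' p : S, φ p < t := by
  simpa only [centeredContent, iInf_lt_iff, exists_prop] using h

lemma centeredContent_le_tsum {ι : Type*} [Countable ι] {g : ι → α × ℝ} (hc : ∀ i, (g i).1 ∈ E)
    (hd : ∀ i, diam (closedBall (g i).1 (g i).2) ≤ 2 * δ)
    (hE : E ⊆ ⋃ i, closedBall (g i).1 (g i).2) : centeredContent φ δ E ≤ ∑' i, φ (g i) := by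
  refine (centeredContent_le (isBallCover_range hc hd hE)).trans ?_
  rw [← iUnion_singleton_eq_range]
  exact (ENNReal.tsum_iUnion_le_tsum φ _).trans_eq (tsum_congr fun i => tsum_singleton (g i) φ)

lemma centeredContent_empty : centeredContent φ δ ∅ = 0 :=
  le_antisymm ((centeredContent_le_tsum (g := Empty.rec) (by simp) (by simp) (by simp)).trans_eq
    tsum_empty) zero_le

lemma centeredContent_anti {δ' : ℝ} (h : δ ≤ δ') :
    centeredContent φ δ' E ≤ centeredContent φ δ E :=
  le_iInf₂ fun _ hS => centeredContent_le (hS.mono h)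

lemma centeredContent_iUnion_le {ι : Type*} [Countable ι] (E : ι → Set α) :
    centeredContent φ δ (⋃ i, E i) ≤ ∑' i, centeredContent φ δ (E i) := by
  rcases eq_or_ne (∑' i, centeredContent φ δ (E i)) ∞ with htop | htop
  · exact htop ▸ le_top
  refine ENNReal.le_of_forall_pos_le_add fun e he _ => ?_
  obtain ⟨e', he', hsum⟩ := ENNReal.exists_pos_sum_of_countable (ENNReal.coe_pos.2 he).ne' ι
  choose S hS hSlt using fun i => exists_isBallCover_tsum_lt
    (ENNReal.lt_add_right (ENNReal.ne_top_of_tsum_ne_top htop i) (ENNReal.coe_pos.2 (he' i)).ne')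
  calc centeredContent φ δ (⋃ i, E i)
      ≤ ∑' p : ⋃ i, S i, φ p := centeredContent_le (.iUnion hS)
    _ ≤ ∑' i, ∑' p : S i, φ p := ENNReal.tsum_iUnion_le_tsum _ _
    _ ≤ ∑' i, (centeredContent φ δ (E i) + e' i) := ENNReal.tsum_le_tsum fun i => (hSlt i).le
    _ ≤ ∑' i, centeredContent φ δ (E i) + e := by rw [ENNReal.tsum_add]; gcongr

lemma centeredContent_union_le (E F : Set α) :
    centeredContent φ δ (E ∪ F) ≤ centeredContent φ δ E + centeredContent φ δ F := by
  rw [union_eq_iUnion]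
  refine (centeredContent_iUnion_le _).trans_eq ?_
  rw [tsum_bool, add_comm, cond_true, cond_false]

lemma centeredContent_add_le_union (hδ : 0 ≤ δ) (h : ∀ x ∈ F, ∀ y ∈ G, 2 * δ < dist x y) :
    centeredContent φ δ F + centeredContent φ δ G ≤ centeredContent φ δ (F ∪ G) := by
  refine le_iInf₂ fun S hS => ?_
  have hdisj : Disjoint {p ∈ S | p.1 ∈ F} {p ∈ S | p.1 ∈ G} :=
    Set.disjoint_left.2 fun p hF hG => by
      have := h p.1 hF.2 p.1 hG.2
      rw [dist_self] at this
      linarith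
  calc centeredContent φ δ F + centeredContent φ δ G
      ≤ ∑' p : {p ∈ S | p.1 ∈ F}, φ p + ∑' p : {p ∈ S | p.1 ∈ G}, φ p :=
        add_le_add (centeredContent_le (hS.sep_left h)) (centeredContent_le
          (IsBallCover.sep_left (union_comm F G ▸ hS) fun y hy x hx => dist_comm x y ▸ h x hx y hy))
    _ = ∑' p : ({p ∈ S | p.1 ∈ F} ∪ {p ∈ S | p.1 ∈ G} : Set (α × ℝ)), φ p :=
        (ENNReal.summable.tsum_union_disjoint hdisj ENNReal.summable).symm
    _ ≤ ∑' p : S, φ p :=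
        ENNReal.tsum_mono_subtype φ (union_subset (sep_subset _ _) (sep_subset _ _))

/-- The centred Hausdorff outer measure of a gauge `φ`. As in the paper, the supremum over subsets
is what makes it monotone: the centred contents are not, because centres must lie in the set. -/
def centeredHausdorff (φ : α × ℝ → ℝ≥0∞) : OuterMeasure α where
  measureOf E := ⨆ (F : Set α) (_ : F ⊆ E) (δ : ℝ) (_ : 0 < δ), centeredContent φ δ F
  empty := by simp [subset_empty_iff, centeredContent_empty]
  mono h := biSup_mono fun _ hF => hF.trans h
  iUnion_nat s _ := iSup₂_le fun F hF => iSup₂_le fun δ hδ => by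
    rw [← inter_eq_left.2 hF, inter_iUnion]
    exact (centeredContent_iUnion_le _).trans (ENNReal.tsum_le_tsum fun i =>
      le_iSup₂_of_le (F ∩ s i) inter_subset_right (le_iSup₂_of_le δ hδ le_rfl))

lemma centeredHausdorff_apply (E : Set α) : centeredHausdorff φ E =
    ⨆ (F : Set α) (_ : F ⊆ E) (δ : ℝ) (_ : 0 < δ), centeredContent φ δ F := rfl

lemma centeredContent_le_centeredHausdorff (hδ : 0 < δ) (h : F ⊆ E) :
    centeredContent φ δ F ≤ centeredHausdorff φ E :=
  le_iSup₂_of_le F h (le_iSup₂_of_le δ hδ le_rfl)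

lemma centeredHausdorff_le {t : ℝ≥0∞} (h : ∀ F ⊆ E, ∀ δ > 0, centeredContent φ δ F ≤ t) :
    centeredHausdorff φ E ≤ t :=
  iSup₂_le fun F hF => iSup₂_le (h F hF)

lemma exists_centeredHausdorff_le_centeredContent_add (hE : centeredHausdorff φ E ≠ ∞)
    {η : ℝ≥0∞} (hη : η ≠ 0) :
    ∃ F ⊆ E, ∃ δ > 0, centeredHausdorff φ E ≤ centeredContent φ δ F + η := by
  rcases eq_or_ne (centeredHausdorff φ E) 0 with h0 | h0
  · exact ⟨∅, empty_subset E, 1, one_pos, h0 ▸ zero_le⟩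
  have hlt : centeredHausdorff φ E - η < centeredHausdorff φ E := ENNReal.sub_lt_self hE h0 hη
  conv_rhs at hlt => rw [centeredHausdorff_apply]
  simp only [lt_iSup_iff, exists_prop] at hlt
  obtain ⟨F, hF, δ, hδ, h⟩ := hlt
  exact ⟨F, hF, δ, hδ, tsub_le_iff_right.1 h.le⟩

lemma centeredHausdorff_limsup_eq_zero {Z : ℕ → Set α} {d : ℕ → ℝ} (hd : Tendsto d atTop (𝓝 0))
    (hZ : ∀ k, ∀ G ⊆ Z k, centeredContent φ (d k) G = 0) :
    centeredHausdorff φ (limsup Z atTop) = 0 := by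
  refine le_antisymm (centeredHausdorff_le fun G hG δ hδ => ?_) zero_le
  obtain ⟨n, hn⟩ := eventually_atTop.1 (hd.eventually_le_const hδ)
  have hGsub : G ⊆ ⋃ k : Ici n, Z k := fun x hx => by
    obtain ⟨k, hk, hxk⟩ := frequently_atTop.1 (mem_limsup_iff_frequently_mem.1 (hG hx)) n
    exact mem_iUnion.2 ⟨⟨k, hk⟩, hxk⟩
  rw [← inter_eq_left.2 hGsub, inter_iUnion]
  refine (centeredContent_iUnion_le _).trans_eq (ENNReal.tsum_eq_zero.2 fun k => ?_)
  exact le_antisymm ((centeredContent_anti (hn k k.2)).trans_eq (hZ k _ inter_subset_right)) zero_le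

lemma secondCountableTopology_of_centeredHausdorff_ne_top
    (h : centeredHausdorff φ (univ : Set α) ≠ ∞) : SecondCountableTopology α := by
  refine secondCountable_of_almost_dense_set fun ε hε => ?_
  obtain ⟨S, hS, -⟩ := exists_isBallCover_tsum_lt
    ((centeredContent_le_centeredHausdorff (half_pos hε) (Subset.refl univ)).trans_lt h.lt_top)
  refine ⟨Prod.fst '' S, hS.countable.image _, fun x => ?_⟩
  obtain ⟨p, hp, hxp⟩ := mem_iUnion₂.1 (hS.subset (mem_univ x))
  exact ⟨p.1, mem_image_of_mem _ hp, (hS.dist_center_le hp hxp).trans_eq (by ring)⟩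

lemma centeredHausdorff_eq_zero_of_frequently [SecondCountableTopology α]
    (h : ∀ x ∈ E, ∃ᶠ r in 𝓝[>] 0, φ (x, r) = 0) : centeredHausdorff φ E = 0 := by
  refine le_antisymm (centeredHausdorff_le fun F hF δ hδ => ?_) zero_le
  have hr : ∀ x ∈ F, ∃ r, φ (x, r) = 0 ∧ r ∈ Ioc 0 δ := fun x hx =>
    ((h x (hF hx)).and_eventually (Ioc_mem_nhdsGT hδ)).exists
  choose! r hr0 hrδ using hr
  obtain ⟨t, htF, htc, ht⟩ := countable_cover_nhdsWithin (f := fun x => closedBall x (r x))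
    fun x hx => mem_nhdsWithin_of_mem_nhds (closedBall_mem_nhds x (hrδ x hx).1)
  have := htc.to_subtype
  refine (centeredContent_le_tsum (g := fun x : t => ((x : α), r x)) (fun x => htF x.2)
    (fun x => ?_) ?_).trans_eq (ENNReal.tsum_eq_zero.2 fun x => hr0 x (htF x.2))
  · obtain ⟨hpos, hle⟩ := hrδ x (htF x.2)
    exact (diam_closedBall hpos.le).trans (by gcongr)
  · rwa [← biUnion_eq_iUnion t fun x _ => closedBall x (r x)]

end Content

section Measure

variable {α : Type*} [MetricSpace α] {φ : α × ℝ → ℝ≥0∞}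

lemma centeredHausdorff_isMetric (φ : α × ℝ → ℝ≥0∞) : (centeredHausdorff φ).IsMetric := by
  rintro s t ⟨d, hd0, hd⟩
  obtain ⟨e, he0, hed⟩ := ENNReal.lt_iff_exists_nnreal_btwn.1 (pos_iff_ne_zero.2 hd0)
  have hdist : ∀ x ∈ s, ∀ y ∈ t, (e : ℝ) < dist x y := fun x hx y hy => by
    simpa only [edist_nndist, ENNReal.coe_lt_coe, ← NNReal.coe_lt_coe, coe_nndist] using
      hed.trans_le (hd x hx y hy)
  refine le_antisymm (measure_union_le _ _) ?_
  refine ENNReal.biSup_add_biSup_le' ⟨∅, empty_subset s⟩ ⟨∅, empty_subset t⟩ fun F hF G hG =>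
    ENNReal.biSup_add_biSup_le' ⟨1, one_pos⟩ ⟨1, one_pos⟩ fun δ hδ δ' hδ' => ?_
  have he : (0 : ℝ) < e := by exact_mod_cast he0
  obtain ⟨ρ, hρ0, hρ⟩ := exists_between (lt_min (half_pos he) (lt_min hδ hδ'))
  obtain ⟨hρe, hρδ, hρδ'⟩ : ρ < e / 2 ∧ ρ < δ ∧ ρ < δ' := by simpa only [lt_min_iff] using hρ
  calc centeredContent φ δ F + centeredContent φ δ' G
      ≤ centeredContent φ ρ F + centeredContent φ ρ G :=
        add_le_add (centeredContent_anti hρδ.le) (centeredContent_anti hρδ'.le)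
    _ ≤ centeredContent φ ρ (F ∪ G) := centeredContent_add_le_union hρ0.le fun x hx y hy => by
        linarith [hdist x (hF hx) y (hG hy)]
    _ ≤ centeredHausdorff φ (s ∪ t) :=
        centeredContent_le_centeredHausdorff hρ0 (union_subset_union hF hG)

variable [MeasurableSpace α] [BorelSpace α]

/-- The restriction of `centeredHausdorff φ` to the Borel sets, as a measure. -/
def centeredMeasure (φ : α × ℝ → ℝ≥0∞) : Measure α :=
  (centeredHausdorff φ).toMeasure
    (BorelSpace.measurable_eq.le.trans (centeredHausdorff_isMetric φ).borel_le_caratheodory)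

lemma centeredMeasure_apply {s : Set α} (hs : MeasurableSet s) :
    centeredMeasure φ s = centeredHausdorff φ s :=
  toMeasure_apply _ _ hs

lemma centeredHausdorff_le_centeredMeasure (s : Set α) :
    centeredHausdorff φ s ≤ centeredMeasure φ s :=
  le_toMeasure_apply _ _ s

end Measure

section Vitali

variable {α : Type*} [PseudoMetricSpace α] {φ : α × ℝ → ℝ≥0∞} {δ : ℝ} {A G T : Set α}
  {t u v : Set (α × ℝ)}

lemma exists_disjoint_subfamily_forall_finite_covering [SeparableSpace α]
    (ht : ∀ p ∈ t, p.2 ∈ Ioc 0 δ) (hfine : ∀ x ∈ A, ∃ᶠ r in 𝓝[>] 0, (x, r) ∈ t) :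
    ∃ u ⊆ t, u.Countable ∧ u.PairwiseDisjoint (fun p => closedBall p.1 p.2) ∧
      ∀ s : Set (α × ℝ), s.Finite →
        A \ ⋃ p ∈ s, closedBall p.1 p.2 ⊆ ⋃ p ∈ u \ s, closedBall p.1 (5 * p.2) := by
  obtain ⟨u, hut, hdisj, hcov⟩ := Vitali.exists_disjoint_subfamily_covering_enlargement
    (fun p : α × ℝ => closedBall p.1 p.2) t Prod.snd 2 one_lt_two (fun p hp => (ht p hp).1.le) δ
    (fun p hp => (ht p hp).2) (fun p hp => nonempty_closedBall.2 (ht p hp).1.le)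
  refine ⟨u, hut, hdisj.countable_of_nonempty_interior fun p hp => ⟨p.1, ?_⟩, hdisj,
    fun s hs x ⟨hxA, hxs⟩ => ?_⟩
  · exact mem_interior_iff_mem_nhds.2 (closedBall_mem_nhds _ (ht p (hut hp)).1)
  have hclosed : IsClosed (⋃ p ∈ s, closedBall p.1 p.2) :=
    hs.isClosed_biUnion fun _ _ => isClosed_closedBall
  obtain ⟨d, hd, hdisjs⟩ := nhds_basis_closedBall.mem_iff.1 (hclosed.isOpen_compl.mem_nhds hxs)
  obtain ⟨r, hrt, -, hrd⟩ := ((hfine x hxA).and_eventually (Ioc_mem_nhdsGT hd)).exists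
  obtain ⟨b, hb, ⟨z, hzx, hzb⟩, hrb⟩ := hcov (x, r) hrt
  have hbs : b ∉ s := fun hbs =>
    hdisjs (closedBall_subset_closedBall hrd hzx) (mem_iUnion₂.2 ⟨b, hbs, hzb⟩)
  refine mem_iUnion₂.2 ⟨b, ⟨hb, hbs⟩, mem_closedBall.2 ?_⟩
  calc dist x b.1 ≤ dist z x + dist z b.1 := dist_triangle_left _ _ _
    _ ≤ 2 * b.2 + b.2 := add_le_add ((mem_closedBall.1 hzx).trans hrb) (mem_closedBall.1 hzb)
    _ ≤ 5 * b.2 := by linarith [(ht b (hut hb)).1]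

/-- The doubling condition for a gauge `φ` on `T`, in the form the Vitali argument needs: the
enlargement `B(x, 5r)` of a ball centred in `T`, recentred at one of its points `y` as
`B(y, 10r)`, costs at most `C` times as much as `B(x, r)`. -/
def DoublingOn (φ : α × ℝ → ℝ≥0∞) (T : Set α) (C : ℝ≥0∞) (r₀ : ℝ) : Prop :=
  ∀ x ∈ T, ∀ r ∈ Ioc 0 r₀, ∀ y ∈ closedBall x (5 * r), φ (y, 10 * r) ≤ C * φ (x, r)

variable {C : ℝ≥0∞} {r₀ : ℝ}

lemma DoublingOn.centeredContent_le_mul_tsum (hφ : DoublingOn φ T C r₀) (hv : v.Countable)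
    (hvT : ∀ p ∈ v, p.1 ∈ T) (hvδ : ∀ p ∈ v, p.2 ∈ Ioc 0 δ) (hδ : δ ≤ r₀)
    (hG : G ⊆ ⋃ p ∈ v, closedBall p.1 (5 * p.2)) :
    centeredContent φ (10 * δ) G ≤ C * ∑' p : v, φ p := by
  let w : Set (α × ℝ) := {p ∈ v | (G ∩ closedBall p.1 (5 * p.2)).Nonempty}
  have hwv : w ⊆ v := sep_subset _ _
  have := (hv.mono hwv).to_subtype
  choose y hyG hy using fun p : w => p.2.2
  calc centeredContent φ (10 * δ) G ≤ ∑' p : w, φ (y p, 10 * (p : α × ℝ).2) := by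
        refine centeredContent_le_tsum (g := fun p : w => (y p, 10 * (p : α × ℝ).2)) hyG
          (fun p => ?_) fun x hx => ?_
        · obtain ⟨hpos, hle⟩ := hvδ p (hwv p.2)
          exact (diam_closedBall (by positivity)).trans (by dsimp only; gcongr)
        · obtain ⟨p, hp, hxp⟩ := mem_iUnion₂.1 (hG hx)
          let p' : w := ⟨p, hp, x, hx, hxp⟩
          refine mem_iUnion.2 ⟨p', (dist_triangle_right x (y p') p.1).trans ?_⟩
          have hyp : dist (y p') p.1 ≤ 5 * p.2 := hy p'
          linarith [mem_closedBall.1 hxp]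
    _ ≤ ∑' p : w, C * φ p := ENNReal.tsum_le_tsum fun p =>
        hφ _ (hvT p (hwv p.2)) _ (Ioc_subset_Ioc_right hδ (hvδ p (hwv p.2))) _ (hy p)
    _ = C * ∑' p : w, φ p := ENNReal.tsum_mul_left
    _ ≤ C * ∑' p : v, φ p := mul_le_mul_right (ENNReal.tsum_mono_subtype φ hwv) C

lemma tendsto_tsum_sdiff_finset_atTop_zero {ι : Type*} {f : ι → ℝ≥0∞} {u : Set ι}
    (h : ∑' i : u, f i ≠ ∞) :
    Tendsto (fun s : Finset ι => ∑' i : (u \ s : Set ι), f i) atTop (𝓝 0) := by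
  rw [tsum_subtype] at h
  refine (ENNReal.tendsto_tsum_compl_atTop_zero h).congr fun s => ?_
  rw [tsum_subtype (u \ s : Set ι), sdiff_eq, inter_comm, ← indicator_indicator]
  exact tsum_subtype (s : Set ι)ᶜ (u.indicator f)

lemma DoublingOn.centeredContent_eq_zero (hφ : DoublingOn φ T C r₀) (hC : C ≠ ∞)
    (hu : u.Countable) (huT : ∀ p ∈ u, p.1 ∈ T) (huδ : ∀ p ∈ u, p.2 ∈ Ioc 0 δ) (hδ : δ ≤ r₀)
    (hsum : ∑' p : u, φ p ≠ ∞)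
    (hG : ∀ s : Set (α × ℝ), s.Finite → G ⊆ ⋃ p ∈ u \ s, closedBall p.1 (5 * p.2)) :
    centeredContent φ (10 * δ) G = 0 := by
  have hbound : ∀ s : Finset (α × ℝ),
      centeredContent φ (10 * δ) G ≤ C * ∑' p : (u \ s : Set (α × ℝ)), φ p := fun s =>
    hφ.centeredContent_le_mul_tsum (hu.mono sdiff_subset) (fun p hp => huT p hp.1)
      (fun p hp => huδ p hp.1) hδ (hG s s.finite_toSet)
  have hlim := ENNReal.Tendsto.const_mul (tendsto_tsum_sdiff_finset_atTop_zero hsum) (Or.inr hC)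
  rw [mul_zero] at hlim
  exact le_antisymm (ge_of_tendsto' hlim hbound) zero_le

end Vitali

section HeavyBalls

variable {α : Type*} [PseudoMetricSpace α] {φ : α × ℝ → ℝ≥0∞} {δ δ₀ : ℝ} {ε : ℝ≥0∞} {A F : Set α}
  {u : Set (α × ℝ)}

/-- The balls `B` centred in `A`, of radius at most `δ`, with `(1 + ε) φ(B) ≤ H(B)` for the centred
Hausdorff measure `H` of `φ`: those that break, perhaps only with equality, the density bound. -/
def heavyBalls (φ : α × ℝ → ℝ≥0∞) (ε : ℝ≥0∞) (A : Set α) (δ : ℝ) : Set (α × ℝ) :=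
  {p | p.1 ∈ A ∧ p.2 ∈ Ioc 0 δ ∧ (1 + ε) * φ p ≤ centeredHausdorff φ (closedBall p.1 p.2)}

lemma heavyBalls_mono (hA : A ⊆ F) (hδ : δ ≤ δ₀) : heavyBalls φ ε A δ ⊆ heavyBalls φ ε F δ₀ :=
  fun _ hp => ⟨hA hp.1, Ioc_subset_Ioc_right hδ hp.2.1, hp.2.2⟩

lemma centeredContent_le_tsum_add_compl (hδ : 0 < δ) (hu : u.Countable)
    (hheavy : u ⊆ heavyBalls φ ε F δ) :
    centeredContent φ δ F ≤
      ∑' p : u, φ p + centeredHausdorff φ (⋃ p ∈ u, closedBall p.1 p.2)ᶜ := by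
  set W := ⋃ p ∈ u, closedBall p.1 p.2
  have hcover : IsBallCover (F ∩ W) δ u :=
    { countable := hu
      center_mem := fun p hp => ⟨(hheavy hp).1,
        mem_iUnion₂.2 ⟨p, hp, mem_closedBall_self (hheavy hp).2.1.1.le⟩⟩
      diam_le := fun p hp =>
        (diam_closedBall (hheavy hp).2.1.1.le).trans (by gcongr; exact (hheavy hp).2.1.2)
      subset := inter_subset_right }
  calc centeredContent φ δ F = centeredContent φ δ (F ∩ W ∪ F ∩ Wᶜ) := by rw [inter_union_compl]
    _ ≤ centeredContent φ δ (F ∩ W) + centeredContent φ δ (F ∩ Wᶜ) := centeredContent_union_le _ _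
    _ ≤ _ := add_le_add (centeredContent_le hcover)
        (centeredContent_le_centeredHausdorff hδ inter_subset_right)

end HeavyBalls

lemma measure_liminf_atTop_le {α : Type*} [MeasurableSpace α] {m : Measure α} {W : ℕ → Set α}
    {c : ℝ≥0∞} (h : ∀ k, m (W k) ≤ c) : m (liminf W atTop) ≤ c := by
  have hmono : Monotone fun n => ⋂ k ≥ n, W k := fun _ _ hab =>
    biInter_subset_biInter_left fun _ hk => hab.trans hk
  rw [liminf_eq_iSup_iInf_of_nat]
  simp only [iSup_eq_iUnion, iInf_eq_iInter]
  rw [hmono.measure_iUnion]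
  exact iSup_le fun n => (measure_mono (biInter_subset_of_mem (le_refl n))).trans (h n)

section Density

variable {α : Type*} [MetricSpace α] {φ : α × ℝ → ℝ≥0∞} {δ δ₀ : ℝ} {ε η : ℝ≥0∞} {A F : Set α}
  {u : Set (α × ℝ)}

lemma mul_tsum_le_centeredMeasure_biUnion [MeasurableSpace α] [BorelSpace α] (hu : u.Countable)
    (hdisj : u.PairwiseDisjoint fun p => closedBall p.1 p.2) (hheavy : u ⊆ heavyBalls φ ε A δ) :
    (1 + ε) * ∑' p : u, φ p ≤ centeredMeasure φ (⋃ p ∈ u, closedBall p.1 p.2) := by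
  rw [measure_biUnion hu hdisj fun _ _ => measurableSet_closedBall, ← ENNReal.tsum_mul_left]
  refine ENNReal.tsum_le_tsum fun p => ?_
  rw [centeredMeasure_apply measurableSet_closedBall]
  exact (hheavy p.2).2.2

lemma centeredMeasure_biUnion_heavyBalls_le [MeasurableSpace α] [BorelSpace α]
    [IsFiniteMeasure (centeredMeasure φ)] (hε0 : ε ≠ 0) (hε : ε ≠ ∞) (hδ : 0 < δ)
    (hF : centeredMeasure φ univ ≤ centeredContent φ δ F + η) (hu : u.Countable)
    (hdisj : u.PairwiseDisjoint fun p => closedBall p.1 p.2) (hheavy : u ⊆ heavyBalls φ ε F δ) :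
    centeredMeasure φ (⋃ p ∈ u, closedBall p.1 p.2) ≤ (1 + ε) / ε * η := by
  set m := centeredMeasure φ
  set W := ⋃ p ∈ u, closedBall p.1 p.2
  have hW : MeasurableSet W := .biUnion hu fun _ _ => measurableSet_closedBall
  have hmW : m W ≤ ∑' p : u, φ p + η := by
    refine (ENNReal.add_le_add_iff_right (measure_ne_top m Wᶜ)).1 ?_
    calc m W + m Wᶜ = m univ := measure_add_measure_compl hW
      _ ≤ centeredContent φ δ F + η := hF
      _ ≤ ∑' p : u, φ p + m Wᶜ + η := by
        gcongr
        rw [centeredMeasure_apply hW.compl]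
        exact centeredContent_le_tsum_add_compl hδ hu hheavy
      _ = ∑' p : u, φ p + η + m Wᶜ := add_right_comm _ _ _
  have hεW : m W + ε * m W ≤ m W + (1 + ε) * η :=
    calc m W + ε * m W = (1 + ε) * m W := by ring
      _ ≤ (1 + ε) * ∑' p : u, φ p + (1 + ε) * η := by rw [← mul_add]; gcongr
      _ ≤ m W + (1 + ε) * η := by
        gcongr
        exact mul_tsum_le_centeredMeasure_biUnion hu hdisj hheavy
  rw [← ENNReal.mul_div_right_comm, ENNReal.le_div_iff_mul_le (Or.inl hε0) (Or.inl hε), mul_comm]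
  exact (ENNReal.add_le_add_iff_left (measure_ne_top m W)).1 hεW

variable {C : ℝ≥0∞} {r₀ : ℝ} {T : Set α}

lemma exists_centeredMeasure_le_and_content_eq_zero [MeasurableSpace α] [BorelSpace α]
    [SeparableSpace α] [IsFiniteMeasure (centeredMeasure φ)] (hε0 : ε ≠ 0) (hε : ε ≠ ∞)
    (hφ : DoublingOn φ A C r₀) (hC : C ≠ ∞) (hδ : 0 < δ) (hδδ₀ : δ ≤ δ₀) (hδr₀ : δ ≤ r₀)
    (hF : centeredMeasure φ univ ≤ centeredContent φ δ₀ F + η) (hAF : A ⊆ F)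
    (hA : ∀ x ∈ A, ∃ᶠ r in 𝓝[>] 0, (1 + ε) * φ (x, r) ≤ centeredHausdorff φ (closedBall x r)) :
    ∃ W, centeredMeasure φ W ≤ (1 + ε) / ε * η ∧
      ∀ G ⊆ A \ W, centeredContent φ (10 * δ) G = 0 := by
  obtain ⟨u, hu, huc, hdisj, hcov⟩ := exists_disjoint_subfamily_forall_finite_covering
    (t := heavyBalls φ ε A δ) (fun p hp => hp.2.1) fun x hx =>
      ((hA x hx).and_eventually (Ioc_mem_nhdsGT hδ)).mono fun r hr => ⟨hx, hr.2, hr.1⟩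
  have hsum : ∑' p : u, φ p ≠ ∞ := ne_top_of_le_ne_top (measure_ne_top _ _)
    ((le_mul_of_one_le_left' le_self_add).trans (mul_tsum_le_centeredMeasure_biUnion huc hdisj hu))
  refine ⟨⋃ p ∈ u, closedBall p.1 p.2, centeredMeasure_biUnion_heavyBalls_le hε0 hε
    (hδ.trans_le hδδ₀) hF huc hdisj (hu.trans (heavyBalls_mono hAF hδδ₀)), fun G hG => ?_⟩
  refine hφ.centeredContent_eq_zero hC huc (fun p hp => (hu hp).1) (fun p hp => (hu hp).2.1) hδr₀
    hsum fun s hs => ?_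
  rw [← sdiff_inter_self_eq_sdiff]
  exact (hG.trans (sdiff_subset_sdiff_right (biUnion_subset_biUnion_left inter_subset_right))).trans
    (hcov (s ∩ u) (hs.inter_of_left u))

lemma centeredHausdorff_le_of_frequently [MeasurableSpace α] [BorelSpace α]
    [SeparableSpace α] [IsFiniteMeasure (centeredMeasure φ)] (hε0 : ε ≠ 0) (hε : ε ≠ ∞)
    (hφ : DoublingOn φ A C r₀) (hC : C ≠ ∞) (hr₀ : 0 < r₀) (hδ₀ : 0 < δ₀)
    (hF : centeredMeasure φ univ ≤ centeredContent φ δ₀ F + η) (hAF : A ⊆ F)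
    (hA : ∀ x ∈ A, ∃ᶠ r in 𝓝[>] 0, (1 + ε) * φ (x, r) ≤ centeredHausdorff φ (closedBall x r)) :
    centeredHausdorff φ A ≤ (1 + ε) / ε * η := by
  obtain ⟨δ, -, hδ, hδlim⟩ := exists_seq_strictAnti_tendsto' (lt_min hδ₀ hr₀)
  have hδmin (k : ℕ) : δ k ≤ δ₀ ∧ δ k ≤ r₀ := le_min_iff.1 (hδ k).2.le
  choose W hW hAW using fun k => exists_centeredMeasure_le_and_content_eq_zero hε0 hε hφ hC
    (hδ k).1 (hδmin k).1 (hδmin k).2 hF hAF hA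
  have hδlim' : Tendsto (fun k => 10 * δ k) atTop (𝓝 0) := by
    simpa only [mul_zero] using hδlim.const_mul 10
  have hAsub : A ⊆ liminf W atTop ∪ limsup (fun k => A \ W k) atTop := fun x hx => by
    rw [mem_union, mem_liminf_iff_eventually_mem, mem_limsup_iff_frequently_mem,
      or_iff_not_imp_left, not_eventually]
    exact fun h => h.mono fun k hk => ⟨hx, hk⟩
  calc centeredHausdorff φ A
      ≤ centeredHausdorff φ (liminf W atTop) +
          centeredHausdorff φ (limsup (fun k => A \ W k) atTop) :=
        (measure_mono hAsub).trans (measure_union_le _ _)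
    _ = centeredHausdorff φ (liminf W atTop) := by
        rw [centeredHausdorff_limsup_eq_zero hδlim' hAW, add_zero]
    _ ≤ centeredMeasure φ (liminf W atTop) := centeredHausdorff_le_centeredMeasure _
    _ ≤ (1 + ε) / ε * η := measure_liminf_atTop_le hW

lemma centeredHausdorff_univ_le_add (hfin : centeredHausdorff φ univ ≠ ∞) (hε0 : ε ≠ 0)
    (hε : ε ≠ ∞) (hφ : DoublingOn φ T C r₀) (hC : C ≠ ∞) (hr₀ : 0 < r₀)
    (hT : centeredHausdorff φ Tᶜ = 0) (hη : η ≠ 0) :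
    centeredHausdorff φ univ ≤
      centeredHausdorff φ {x | ∀ᶠ r in 𝓝[>] 0,
        centeredHausdorff φ (closedBall x r) ≤ (1 + ε) * φ (x, r)} + ((1 + ε) / ε * η + η) := by
  set Λ := {x | ∀ᶠ r in 𝓝[>] 0, centeredHausdorff φ (closedBall x r) ≤ (1 + ε) * φ (x, r)}
  borelize α
  have := secondCountableTopology_of_centeredHausdorff_ne_top hfin
  have huniv : centeredMeasure φ univ = centeredHausdorff φ univ :=
    centeredMeasure_apply MeasurableSet.univ
  have : IsFiniteMeasure (centeredMeasure φ) := ⟨huniv.trans_lt hfin.lt_top⟩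
  obtain ⟨F, -, δ₀, hδ₀, hF⟩ := exists_centeredHausdorff_le_centeredContent_add hfin hη
  have hA : centeredHausdorff φ ((F \ Λ) ∩ T) ≤ (1 + ε) / ε * η := by
    refine centeredHausdorff_le_of_frequently (F := F) hε0 hε (fun x hx => hφ x hx.2) hC hr₀ hδ₀
      (huniv.trans_le hF) (fun x hx => hx.1.1) fun x hx => ?_
    have hxΛ : x ∉ Λ := hx.1.2
    rw [mem_ofPred_eq, not_eventually] at hxΛ
    exact hxΛ.mono fun r hr => (not_le.1 hr).le
  have hFsub : F ⊆ Λ ∪ (F \ Λ) ∩ T ∪ Tᶜ := fun x hx => by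
    by_cases hΛ : x ∈ Λ <;> by_cases hxT : x ∈ T <;> simp [hx, hΛ, hxT]
  calc centeredHausdorff φ univ ≤ centeredContent φ δ₀ F + η := hF
    _ ≤ centeredHausdorff φ (Λ ∪ (F \ Λ) ∩ T ∪ Tᶜ) + η := by
        gcongr
        exact centeredContent_le_centeredHausdorff hδ₀ hFsub
    _ ≤ centeredHausdorff φ Λ + centeredHausdorff φ ((F \ Λ) ∩ T) + centeredHausdorff φ Tᶜ + η := by
        gcongr
        exact (measure_union_le _ _).trans (by gcongr; exact measure_union_le _ _)
    _ ≤ centeredHausdorff φ Λ + ((1 + ε) / ε * η + η) := by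
        rw [hT, add_zero, add_assoc]
        gcongr

theorem centeredHausdorff_univ_eq_of_doublingOn (hfin : centeredHausdorff φ univ ≠ ∞)
    (hε0 : ε ≠ 0) (hε : ε ≠ ∞) (hφ : DoublingOn φ T C r₀) (hC : C ≠ ∞) (hr₀ : 0 < r₀)
    (hT : centeredHausdorff φ Tᶜ = 0) :
    centeredHausdorff φ univ = centeredHausdorff φ {x | ∀ᶠ r in 𝓝[>] 0,
      centeredHausdorff φ (closedBall x r) ≤ (1 + ε) * φ (x, r)} := by
  refine le_antisymm ?_ (measure_mono (subset_univ _))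
  set h := centeredHausdorff φ {x | ∀ᶠ r in 𝓝[>] 0,
    centeredHausdorff φ (closedBall x r) ≤ (1 + ε) * φ (x, r)}
  have hlim : Tendsto (fun η => h + ((1 + ε) / ε * η + η)) (𝓝[>] 0) (𝓝 h) := by
    have hconst : (1 + ε) / ε ≠ ∞ :=
      ENNReal.div_ne_top (ENNReal.add_ne_top.2 ⟨ENNReal.one_ne_top, hε⟩) hε0
    have hcont : Continuous fun η => h + ((1 + ε) / ε * η + η) :=
      continuous_const.add ((ENNReal.continuous_const_mul hconst).add continuous_id)
    exact (hcont.tendsto' 0 h (by simp only [mul_zero, add_zero])).mono_left nhdsWithin_le_nhds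
  exact ge_of_tendsto hlim (eventually_mem_nhdsWithin.mono fun η hη =>
    centeredHausdorff_univ_le_add hfin hε0 hε hφ hC hr₀ hT (pos_iff_ne_zero.1 hη))

end Density

section Scaling

lemma apply_pow_mul_le {g : ℝ → ℝ≥0∞} {a s : ℝ} {M : ℝ≥0∞} (ha : 1 < a)
    (h : ∀ r ∈ Ioc 0 s, g (a * r) ≤ M * g r) (n : ℕ) :
    ∀ r ∈ Ioc 0 (s / a ^ n), g (a ^ n * r) ≤ M ^ n * g r := by
  have ha0 : 0 < a := one_pos.trans ha
  induction n with
  | zero => simp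
  | succ n ih =>
    intro r hr
    have hrs : a ^ (n + 1) * r ≤ s := (le_div_iff₀' (pow_pos ha0 _)).1 hr.2
    have hle : a ^ n * r ≤ s := by
      refine le_trans ?_ hrs
      gcongr
      exacts [hr.1.le, ha.le, n.le_succ]
    calc g (a ^ (n + 1) * r) = g (a * (a ^ n * r)) := by rw [pow_succ', mul_assoc]
      _ ≤ M * g (a ^ n * r) := h _ ⟨mul_pos (pow_pos ha0 n) hr.1, hle⟩
      _ ≤ M * (M ^ n * g r) := by
        gcongr
        exact ih r ⟨hr.1, (le_div_iff₀' (pow_pos ha0 n)).2 hle⟩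
      _ = M ^ (n + 1) * g r := by rw [pow_succ', mul_assoc]

lemma exists_forall_apply_mul_le {ι : Type*} {T : Set ι} {g : ι → ℝ → ℝ≥0∞} {a s : ℝ} {M : ℝ≥0∞}
    (hg : ∀ x, Monotone (g x)) (ha : 1 < a) (hM : M ≠ ∞) (hs : 0 < s)
    (h : ∀ x ∈ T, ∀ r ∈ Ioc 0 s, g x (a * r) ≤ M * g x r) (L : ℝ) :
    ∃ C ≠ ∞, ∃ r₀ > 0, ∀ x ∈ T, ∀ r ∈ Ioc 0 r₀, g x (L * r) ≤ C * g x r := by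
  obtain ⟨n, hn⟩ := pow_unbounded_of_one_lt L ha
  refine ⟨M ^ n, ENNReal.pow_ne_top hM, s / a ^ n, by positivity, fun x hx r hr => ?_⟩
  exact (hg x (mul_le_mul_of_nonneg_right hn.le hr.1.le)).trans
    (apply_pow_mul_le ha (h x hx) n r hr)

lemma PremeasureBlanketed.exists_forall_le {α : Type*} [MetricSpace α] {ξ : Set α → ℝ≥0∞}
    (hξD : PremeasureBlanketed ξ) (hξ : IsPremeasure ξ) (L : ℝ) :
    ∃ C ≠ ∞, ∃ r₀ > 0, ∀ x, ∀ r ∈ Ioc 0 r₀,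
      ξ (closedBall x (L * r)) ≤ C * ξ (closedBall x r) := by
  obtain ⟨K, -, hK⟩ := hξD
  simpa only [mem_univ, forall_const] using
    exists_forall_apply_mul_le (T := univ) (g := fun x r => ξ (closedBall x r))
      (fun x r s hrs => hξ.2 x r x s (closedBall_subset_closedBall hrs)) one_lt_two
      ENNReal.coe_ne_top one_pos (fun x _ r hr => hK x r hr.1 hr.2) L

end Scaling

section BallGauge

variable {α : Type*} [MetricSpace α] [MeasurableSpace α] {μ : Measure α} {q : ℝ}
  {ξ : Set α → ℝ≥0∞} {δ : ℝ} {E : Set α}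

/-- The cost `μ(B)^q ξ(B)` of a ball `B = B(x, r)`, as a gauge on pairs `(x, r)`. -/
def ballGauge (μ : Measure α) (q : ℝ) (ξ : Set α → ℝ≥0∞) : α × ℝ → ℝ≥0∞ :=
  fun p => ballWeight μ q ξ (closedBall p.1 p.2)

lemma exists_isCenteredCover_tsum_eq (h0 : ξ ∅ = 0) (hδ : 0 ≤ δ) (hE : E.Nonempty)
    {S : Set (α × ℝ)} (hS : IsBallCover E δ S) :
    ∃ c r, IsCenteredCover E δ c r ∧
      ∑' i, ballWeight μ q ξ (closedBall (c i) (r i)) = ∑' p : S, ballGauge μ q ξ p := by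
  obtain ⟨x₀, hx₀⟩ := hE
  have := hS.countable.to_subtype
  obtain ⟨f, hf⟩ := exists_injective_nat S
  -- The sequence is padded with the empty ball `B(x₀, -1)`, which costs nothing.
  let g : ℕ → α × ℝ := Function.extend f (↑) fun _ => (x₀, -1)
  have hgf (p : S) : g (f p) = p := hf.extend_apply _ _ p
  have hg (n : ℕ) (hn : n ∉ range f) : g n = (x₀, -1) := Function.extend_apply' _ _ _ hn
  have hempty : closedBall x₀ (-1) = ∅ := closedBall_eq_empty.2 neg_one_lt_zero
  have hforall {P : α × ℝ → Prop} (hPS : ∀ p ∈ S, P p) (hP : P (x₀, -1)) (n : ℕ) : P (g n) := by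
    by_cases hn : n ∈ range f
    · obtain ⟨p, rfl⟩ := hn
      exact hgf p ▸ hPS p p.2
    · exact hg n hn ▸ hP
  refine ⟨fun n => (g n).1, fun n => (g n).2, ⟨hforall hS.center_mem hx₀,
    hforall (P := fun p => diam (closedBall p.1 p.2) ≤ 2 * δ) hS.diam_le ?_, fun x hx => ?_⟩, ?_⟩
  · rw [hempty, diam_empty]
    positivity
  · obtain ⟨p, hp, hxp⟩ := mem_iUnion₂.1 (hS.subset hx)
    exact mem_iUnion.2 ⟨f ⟨p, hp⟩, by simpa only [hgf] using hxp⟩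
  · have hsupp : Function.support (fun n => ballGauge μ q ξ (g n)) ⊆ range f := fun n hn => by
      contrapose! hn
      simp [ballGauge, ballWeight, hg n hn, h0]
    calc ∑' n, ballGauge μ q ξ (g n) = ∑' p : S, ballGauge μ q ξ (g (f p)) :=
          (hf.tsum_eq hsupp).symm
      _ = ∑' p : S, ballGauge μ q ξ p := by simp only [hgf]

lemma Hd_eq_centeredContent (h0 : ξ ∅ = 0) (hδ : 0 ≤ δ) (E : Set α) :
    Hd μ q ξ δ E = centeredContent (ballGauge μ q ξ) δ E := by
  rcases E.eq_empty_or_nonempty with rfl | hE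
  · rw [Hd, if_pos rfl, centeredContent_empty]
  rw [Hd, if_neg hE.ne_empty]
  refine le_antisymm (le_iInf₂ fun S hS => ?_) (le_iInf₂ fun c r => le_iInf fun h => ?_)
  · obtain ⟨c, r, hcr, hsum⟩ := exists_isCenteredCover_tsum_eq h0 hδ hE hS
    exact hsum ▸ iInf₂_le_of_le c r (iInf_le _ hcr)
  · exact centeredContent_le_tsum (g := fun i => (c i, r i)) h.1 h.2.1 h.2.2

lemma HM_eq_centeredHausdorff (h0 : ξ ∅ = 0) (E : Set α) :
    HM μ q ξ E = centeredHausdorff (ballGauge μ q ξ) E :=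
  biSup_congr fun F _ => biSup_congr fun _ hδ => Hd_eq_centeredContent h0 hδ.le F

lemma epow_antitone (hq : q ≤ 0) : Antitone (epow · q) := fun a b hab => by
  dsimp only [epow]
  by_cases ha : a = 0
  · rw [if_pos (c := a = 0 ∧ q ≤ 0) ⟨ha, hq⟩]
    exact le_top
  · have hb : b ≠ 0 := ((pos_iff_ne_zero.2 ha).trans_le hab).ne'
    rw [if_neg fun h => hb h.1, if_neg fun h => ha h.1]
    rw [← neg_neg q, ENNReal.rpow_neg, ENNReal.rpow_neg a]
    exact ENNReal.inv_le_inv.2 (ENNReal.rpow_le_rpow hab (neg_nonneg.2 hq))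

lemma epow_of_pos (hq : 0 < q) (x : ℝ≥0∞) : epow x q = x ^ q :=
  if_neg fun h => h.2.not_gt hq

lemma centeredHausdorff_ballGauge_compl_measSupport [SecondCountableTopology α] (hq : 0 < q) :
    centeredHausdorff (ballGauge μ q ξ) (measSupport μ)ᶜ = 0 := by
  refine centeredHausdorff_eq_zero_of_frequently fun x hx => Eventually.frequently ?_
  obtain ⟨r, hr, hμr⟩ : ∃ r > 0, μ (ball x r) = 0 := by
    simpa [measSupport] using hx
  filter_upwards [Ioo_mem_nhdsGT hr] with s hs
  have hμs : μ (closedBall x s) = 0 := measure_mono_null (closedBall_subset_ball hs.2) hμr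
  rw [ballGauge, ballWeight, hμs, epow_of_pos hq, ENNReal.zero_rpow_of_pos hq, zero_mul]

lemma MeasureBlanketed.exists_forall_le (hμ : MeasureBlanketed μ) (L : ℝ) :
    ∃ C ≠ ∞, ∃ r₀ > 0, ∀ x ∈ measSupport μ, ∀ r ∈ Ioc 0 r₀,
      μ (closedBall x (L * r)) ≤ C * μ (closedBall x r) := by
  obtain ⟨a, ha, hlim⟩ := hμ
  obtain ⟨M, hlimM, hM⟩ := exists_between hlim
  obtain ⟨s, hs, hsub⟩ := mem_nhdsGT_iff_exists_Ioc_subset.1 (eventually_lt_of_limsup_lt hlimM)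
  refine exists_forall_apply_mul_le (g := fun x r => μ (closedBall x r))
    (fun x r s hrs => measure_mono (closedBall_subset_closedBall hrs)) ha hM.ne hs
    (fun x hx r hr => ?_) L
  have hdiv : μ (closedBall x (a * r)) / μ (closedBall x r) ≤ M :=
    (le_iSup₂ (f := fun x (_ : x ∈ measSupport μ) =>
      μ (closedBall x (a * r)) / μ (closedBall x r)) x hx).trans (hsub hr).le
  exact (ENNReal.div_le_iff_le_mul (Or.inr hM.ne) (Or.inr (bot_lt_of_lt hlimM).ne')).1 hdiv

variable {T : Set α} {C D : ℝ≥0∞} {r₀ : ℝ}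

lemma doublingOn_ballGauge_of_nonpos (hq : q ≤ 0) (hξ : IsPremeasure ξ)
    (hξC : ∀ x ∈ T, ∀ r ∈ Ioc 0 r₀, ξ (closedBall x (15 * r)) ≤ C * ξ (closedBall x r)) :
    DoublingOn (ballGauge μ q ξ) T C r₀ := fun x hx r hr y hy => by
  have hsub : closedBall y (10 * r) ⊆ closedBall x (15 * r) :=
    closedBall_subset_closedBall' (by linarith [mem_closedBall.1 hy])
  have hsup : closedBall x r ⊆ closedBall y (10 * r) :=
    closedBall_subset_closedBall' (by linarith [mem_closedBall'.1 hy, hr.1])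
  calc epow (μ (closedBall y (10 * r))) q * ξ (closedBall y (10 * r))
      ≤ epow (μ (closedBall x r)) q * (C * ξ (closedBall x r)) :=
        mul_le_mul' (epow_antitone hq (measure_mono hsup))
          ((hξ.2 _ _ _ _ hsub).trans (hξC x hx r hr))
    _ = C * (epow (μ (closedBall x r)) q * ξ (closedBall x r)) := mul_left_comm _ _ _

lemma doublingOn_ballGauge_of_pos (hq : 0 < q) (hξ : IsPremeasure ξ)
    (hξC : ∀ x ∈ T, ∀ r ∈ Ioc 0 r₀, ξ (closedBall x (15 * r)) ≤ C * ξ (closedBall x r))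
    (hμD : ∀ x ∈ T, ∀ r ∈ Ioc 0 r₀, μ (closedBall x (15 * r)) ≤ D * μ (closedBall x r)) :
    DoublingOn (ballGauge μ q ξ) T (D ^ q * C) r₀ := fun x hx r hr y hy => by
  have hsub : closedBall y (10 * r) ⊆ closedBall x (15 * r) :=
    closedBall_subset_closedBall' (by linarith [mem_closedBall.1 hy])
  simp only [ballGauge, ballWeight, epow_of_pos hq]
  calc μ (closedBall y (10 * r)) ^ q * ξ (closedBall y (10 * r))
      ≤ (D * μ (closedBall x r)) ^ q * (C * ξ (closedBall x r)) :=
        mul_le_mul' (ENNReal.rpow_le_rpow ((measure_mono hsub).trans (hμD x hx r hr)) hq.le)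
          ((hξ.2 _ _ _ _ hsub).trans (hξC x hx r hr))
    _ = D ^ q * C * (μ (closedBall x r) ^ q * ξ (closedBall x r)) := by
        rw [ENNReal.mul_rpow_of_nonneg _ _ hq.le, mul_mul_mul_comm]

lemma exists_doublingOn_ballGauge [SecondCountableTopology α] (hμ : MeasureBlanketed μ)
    (hξ : IsPremeasure ξ) (hξD : PremeasureBlanketed ξ) (q : ℝ) :
    ∃ T, centeredHausdorff (ballGauge μ q ξ) Tᶜ = 0 ∧
      ∃ C ≠ ∞, ∃ r₀ > 0, DoublingOn (ballGauge μ q ξ) T C r₀ := by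
  obtain ⟨C, hC, r₁, hr₁, hξC⟩ := hξD.exists_forall_le hξ 15
  rcases le_or_gt q 0 with hq | hq
  · exact ⟨univ, by rw [compl_univ, measure_empty], C, hC, r₁, hr₁,
      doublingOn_ballGauge_of_nonpos hq hξ fun x _ => hξC x⟩
  · obtain ⟨D, hD, r₂, hr₂, hμD⟩ := hμ.exists_forall_le 15
    refine ⟨measSupport μ, centeredHausdorff_ballGauge_compl_measSupport hq, D ^ q * C,
      ENNReal.mul_ne_top (ENNReal.rpow_ne_top_of_nonneg hq.le hD) hC, min r₁ r₂, lt_min hr₁ hr₂,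
      doublingOn_ballGauge_of_pos hq hξ (fun x _ r hr => ?_) fun x hx r hr => ?_⟩
    · exact hξC x r ⟨hr.1, hr.2.trans (min_le_left _ _)⟩
    · exact hμD x hx r ⟨hr.1, hr.2.trans (min_le_right _ _)⟩

end BallGauge

theorem stmt15_general {α : Type*} [MetricSpace α] [MeasurableSpace α] (μ : Measure α)
    (hμ : MeasureBlanketed μ) (q : ℝ) (ξ : Set α → ℝ≥0∞) (hξ : IsPremeasure ξ)
    (hξD : PremeasureBlanketed ξ) (ε : ℝ) (hε : 0 < ε) (hfin : HM μ q ξ univ < ∞) :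
    HM μ q ξ univ =
      HM μ q ξ {x : α | ∃ δx : ℝ, 0 < δx ∧ ∀ r : ℝ, 0 < r → r ≤ δx →
        HM μ q ξ (closedBall x r) ≤
          ENNReal.ofReal (1 + ε) * ballWeight μ q ξ (closedBall x r)} := by
  simp only [HM_eq_centeredHausdorff hξ.1] at hfin ⊢
  have := secondCountableTopology_of_centeredHausdorff_ne_top hfin.ne
  obtain ⟨T, hT, C, hC, r₀, hr₀, hdoubling⟩ := exists_doublingOn_ballGauge hμ hξ hξD q
  rw [centeredHausdorff_univ_eq_of_doublingOn hfin.ne (ENNReal.ofReal_pos.2 hε).ne'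
    ENNReal.ofReal_ne_top hdoubling hC hr₀ hT]
  congr 1
  ext x
  rw [mem_ofPred_eq, ENNReal.ofReal_add zero_le_one hε.le, ENNReal.ofReal_one]
  refine mem_nhdsGT_iff_exists_Ioc_subset.trans (exists_congr fun δ => and_congr_right fun _ => ?_)
  exact ⟨fun h r hr hrδ => h ⟨hr, hrδ⟩, fun h r hr => h r hr.1 hr.2⟩

theorem stmt15 (μ : Measure X) [IsProbabilityMeasure μ] (hμ : MeasureBlanketed μ)
    (q : ℝ) (ξ : Set X → ℝ≥0∞) (hξ : IsPremeasure ξ) (hξD : PremeasureBlanketed ξ)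
    (ε : ℝ) (hε : 0 < ε) (hfin : HM μ q ξ univ < ∞) :
    HM μ q ξ univ =
      HM μ q ξ {x : X | ∃ δx : ℝ, 0 < δx ∧ ∀ r : ℝ, 0 < r → r ≤ δx →
        HM μ q ξ (closedBall x r) ≤
          ENNReal.ofReal (1 + ε) * ballWeight μ q ξ (closedBall x r)} :=
  stmt15_general μ hμ q ξ hξ hξD ε hε hfin

end Thms
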